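/- arXiv:2604.20931 — 4 statements merged into one kernel-verified Lean document; each statement's English description precedes it below -/
import Mathlib

section
/- Let δ ∈ ℂ with Re(δ) ≥ 0 and δ ≠ 0, and let r ≥ 1 be an integer. Set m = ⌊Re(δ)⌋ + 1. Then the m-fold iterate of the Cesàro operator applied to the function x ↦ x^δ · B_r({x})/r! tends to 0 as x → ∞, i.e. P^m[x ↦ x^δ B_r({x})/r!](X) → 0 classically as X → ∞. -/
/-!
Put `f_{δ,r}(x) = x^δ B_r({x}) / r!`. Since `r ≥ 1`, the function `B_{r+1}({x}) / (r+1)!` is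
continuous and bounded with right derivative `B_r({x}) / r!` everywhere, and integration by parts
(`integral_cpowBernoulli`) gives, for `Re δ ≥ 1` and `x > 0`, the recursion
`P f_{δ,r} = f_{δ-1,r+1} - δ P f_{δ-1,r+1}` (`cesaro_cpowBernoulli`). Applying the linear operator
`P^n`, `n = ⌊Re δ⌋`, yields `P^{n+1} f_{δ,r} = P^n f_{δ-1,r+1} - δ P (P^n f_{δ-1,r+1})`.
As `P` preserves the limit `0` at infinity (`LocBdd.tendsto_cesaro`), induction on `⌊Re δ⌋` reduces the claim to
`0 ≤ Re δ < 1` (`tendsto_cesaro_cpowBernoulli`). There, integration by parts on `[1, x]` writes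
`P f_{δ,r}(x)` as `K / x + f_{δ-1,r+1}(x) - δ P g(x)` with `K` constant and `g` the restriction of
`f_{δ-1,r+1}` to `(1, ∞)`; both `f_{δ-1,r+1}` and `g` tend to `0` at infinity.
-/

open Filter Polynomial

/-- The Cesàro averaging operator `P[f](x) = (1/x) ∫₀^x f(t) dt`. -/
noncomputable def cesaro (f : ℝ → ℂ) : ℝ → ℂ :=
  fun x => (x : ℂ)⁻¹ * ∫ t in (0:ℝ)..x, f t

section

open Set MeasureTheory intervalIntegral

/-! ### The Cesàro operator on locally bounded functions -/

/-- Functions that are integrable and bounded on each `(0, X]`. The Cesàro operator maps this class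
to itself (mere integrability near `0` would not be preserved), so on it all iterates of `cesaro`
are honest integrals. -/
def LocBdd (f : ℝ → ℂ) : Prop :=
  ∀ X : ℝ, 0 ≤ X → IntervalIntegrable f volume 0 X ∧ ∃ C : ℝ, ∀ x ∈ Ioc 0 X, ‖f x‖ ≤ C

lemma LocBdd.intervalIntegrable {f : ℝ → ℂ} (hf : LocBdd f) {a b : ℝ} (ha : 0 ≤ a) (hb : 0 ≤ b) :
    IntervalIntegrable f volume a b :=
  (hf a ha).1.symm.trans (hf b hb).1

lemma norm_cesaro_le {f : ℝ → ℂ} {C x : ℝ} (hx : 0 < x) (hC : ∀ t ∈ Ioc 0 x, ‖f t‖ ≤ C) :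
    ‖cesaro f x‖ ≤ C := by
  have h := intervalIntegral.norm_integral_le_of_norm_le_const (a := 0) (b := x) (f := f) (C := C)
    (by rwa [uIoc_of_le hx.le])
  rw [sub_zero, abs_of_pos hx] at h
  rw [cesaro, norm_mul, norm_inv, Complex.norm_real, Real.norm_of_nonneg hx.le,
    inv_mul_le_iff₀ hx]
  linarith

lemma LocBdd.cesaro {f : ℝ → ℂ} (hf : LocBdd f) : LocBdd (cesaro f) := by
  intro X hX
  obtain ⟨hi, C, hC⟩ := hf X hX
  have hbd : ∀ x ∈ Ioc 0 X, ‖_root_.cesaro f x‖ ≤ C := fun x hx =>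
    norm_cesaro_le hx.1 fun t ht => hC t ⟨ht.1, ht.2.trans hx.2⟩
  refine ⟨?_, C, hbd⟩
  rw [intervalIntegrable_iff_integrableOn_Ioc_of_le hX]
  have hcont : ContinuousOn (_root_.cesaro f) (Ioc 0 X) := by
    refine ContinuousOn.mul ?_ ((continuousOn_primitive_interval' hi left_mem_uIcc).mono ?_)
    · exact Complex.continuous_ofReal.continuousOn.inv₀
        fun x hx => Complex.ofReal_ne_zero.2 hx.1.ne'
    · rw [uIcc_of_le hX]
      exact Ioc_subset_Icc_self
  exact IntegrableOn.of_bound (by simp) (hcont.aestronglyMeasurable measurableSet_Ioc) C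
    ((ae_restrict_mem measurableSet_Ioc).mono hbd)

lemma LocBdd.iterate {f : ℝ → ℂ} (hf : LocBdd f) (n : ℕ) : LocBdd (_root_.cesaro^[n] f) := by
  induction n with
  | zero => exact hf
  | succ n ih => rw [Function.iterate_succ_apply']; exact ih.cesaro

/-- Linearity of the iterates. Only the values on `(0, ∞)` are compared, since the identities to
which this is applied hold only there. -/
lemma cesaro_iterate_sub_mul {u v w : ℝ → ℂ} (c : ℂ) (hu : LocBdd u) (hv : LocBdd v)
    (h : ∀ x, 0 < x → w x = u x - c * v x) (n : ℕ) :
    ∀ x, 0 < x → cesaro^[n] w x = cesaro^[n] u x - c * cesaro^[n] v x := by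
  induction n with
  | zero => exact h
  | succ n ih =>
    intro x hx
    simp only [Function.iterate_succ_apply']
    have hu' := ((hu.iterate n) x hx.le).1
    have hv' := ((hv.iterate n) x hx.le).1
    rw [cesaro, cesaro, cesaro, integral_congr_Ioo_of_le (g := fun t => cesaro^[n] u t -
      c * cesaro^[n] v t) hx.le fun t ht => ih t ht.1,
      intervalIntegral.integral_sub hu' (hv'.const_mul c), intervalIntegral.integral_const_mul]
    ring

/-- Regularity of Cesàro averaging: it preserves the limit `0` at infinity. -/
lemma LocBdd.tendsto_cesaro {f : ℝ → ℂ} (hf : LocBdd f) (h : Tendsto f atTop (nhds 0)) :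
    Tendsto (_root_.cesaro f) atTop (nhds 0) := by
  rw [Metric.tendsto_atTop] at h ⊢
  intro ε hε
  obtain ⟨A', hA'⟩ := h (ε / 2) (half_pos hε)
  set A := max A' 0
  have hA0 : 0 ≤ A := le_max_right _ _
  obtain ⟨I, hI⟩ : ∃ I, I = ‖∫ t in (0:ℝ)..A, f t‖ := ⟨_, rfl⟩
  have hI0 : 0 ≤ I := hI ▸ norm_nonneg _
  refine ⟨max (A + 1) (2 * I / ε + 1), fun x hx => ?_⟩
  have hxA : A + 1 ≤ x := (le_max_left _ _).trans hx
  have hxI : 2 * I / ε + 1 ≤ x := (le_max_right _ _).trans hx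
  have hx0 : 0 < x := by linarith
  have hxI' : 2 * I < x * ε := by
    rw [← div_lt_iff₀ hε]; linarith
  have h2 : ‖∫ t in A..x, f t‖ ≤ ε / 2 * |x - A| := by
    refine intervalIntegral.norm_integral_le_of_norm_le_const fun t ht => ?_
    rw [uIoc_of_le (by linarith)] at ht
    have := hA' t ((le_max_left _ _).trans ht.1.le)
    rw [dist_zero_right] at this
    exact this.le
  rw [abs_of_nonneg (by linarith)] at h2
  rw [dist_zero_right, _root_.cesaro, ← integral_add_adjacent_intervals
    (hf.intervalIntegrable le_rfl hA0) (hf.intervalIntegrable hA0 hx0.le), norm_mul, norm_inv,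
    Complex.norm_real, Real.norm_of_nonneg hx0.le, inv_mul_lt_iff₀ hx0]
  have h3 := norm_add_le (∫ t in (0:ℝ)..A, f t) (∫ t in A..x, f t)
  rw [← hI] at h3
  nlinarith

/-! ### Periodized Bernoulli polynomials and powers -/

/-- The periodized Bernoulli polynomial `B_r({x}) / r!`, as a complex number. -/
noncomputable def perBernoulli (r : ℕ) (x : ℝ) : ℂ :=
  ((bernoulliFun r (Int.fract x) / (r.factorial : ℝ) : ℝ) : ℂ)

/-- The function `x ↦ x^δ · B_r({x}) / r!`. -/
noncomputable def cpowBernoulli (δ : ℂ) (r : ℕ) (x : ℝ) : ℂ :=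
  (x : ℂ) ^ δ * perBernoulli r x

lemma measurable_perBernoulli (r : ℕ) : Measurable (perBernoulli r) := by
  unfold perBernoulli
  exact Complex.measurable_ofReal.comp
    (((continuous_bernoulliFun r).measurable.comp measurable_fract).div_const _)

lemma exists_norm_perBernoulli_le (r : ℕ) : ∃ C : ℝ, 0 ≤ C ∧ ∀ x, ‖perBernoulli r x‖ ≤ C := by
  obtain ⟨C, hC⟩ := (isCompact_Icc (a := (0:ℝ)) (b := 1)).exists_bound_of_continuousOn
    (f := fun y => ((bernoulliFun r y / (r.factorial : ℝ) : ℝ) : ℂ))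
    (Complex.continuous_ofReal.comp
      ((continuous_bernoulliFun r).div_const _)).continuousOn
  have h : ∀ x, ‖perBernoulli r x‖ ≤ C := fun x =>
    hC (Int.fract x) ⟨Int.fract_nonneg x, (Int.fract_lt_one x).le⟩
  exact ⟨C, (norm_nonneg _).trans (h 0), h⟩

lemma continuous_perBernoulli_succ {r : ℕ} (hr : 1 ≤ r) : Continuous (perBernoulli (r + 1)) := by
  have h : Continuous (bernoulliFun (r + 1) ∘ Int.fract) :=
    (continuous_bernoulliFun _).continuousOn.comp_fract''
      (bernoulliFun_endpoints_eq_of_ne_one (by omega)).symm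
  exact Complex.continuous_ofReal.comp (h.div_const _)

/-- The right derivative of `B_{r+1}({x}) / (r+1)!` is `B_r({x}) / r!`, at integers included:
`{·}` is a translation on each `[n, n + 1)`. -/
lemma hasDerivWithinAt_perBernoulli_succ (r : ℕ) (x : ℝ) :
    HasDerivWithinAt (perBernoulli (r + 1)) (perBernoulli r x) (Ioi x) x := by
  have h1 : HasDerivAt (fun y : ℝ => bernoulliFun (r + 1) (y - ⌊x⌋) / ((r + 1).factorial : ℝ))
      (bernoulliFun r (Int.fract x) / (r.factorial : ℝ)) x := by
    have h := ((hasDerivAt_bernoulliFun (r + 1) (x - ⌊x⌋)).comp_sub_const x ⌊x⌋).div_const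
      ((r + 1).factorial : ℝ)
    convert! h using 1
    rw [Nat.factorial_succ, Int.self_sub_floor, Nat.add_sub_cancel]
    push_cast
    have : (r.factorial : ℝ) ≠ 0 := by positivity
    field_simp
  refine (h1.ofReal_comp.hasDerivWithinAt).congr_of_eventuallyEq ?_ ?_
  · have : Ioo x (⌊x⌋ + 1 : ℝ) ∈ nhdsWithin x (Ioi x) := Ioo_mem_nhdsGT (Int.lt_floor_add_one x)
    filter_upwards [this] with y hy
    have hfl : ⌊y⌋ = ⌊x⌋ := Int.floor_eq_iff.2 ⟨(Int.floor_le x).trans hy.1.le, hy.2⟩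
    rw [perBernoulli, ← Int.self_sub_floor, hfl]
  · rw [perBernoulli, ← Int.self_sub_floor]

lemma intervalIntegrable_cpowBernoulli {δ : ℂ} (r : ℕ) {a b : ℝ}
    (h : 0 ≤ δ.re ∨ (0:ℝ) ∉ uIcc a b) :
    IntervalIntegrable (cpowBernoulli δ r) volume a b := by
  obtain ⟨C, -, hC⟩ := exists_norm_perBernoulli_le r
  have h1 := intervalIntegrable_cpow (μ := volume) h
  rw [intervalIntegrable_iff] at h1 ⊢
  exact Integrable.mul_bdd (c := C) h1 (measurable_perBernoulli r).aestronglyMeasurable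
    (Filter.Eventually.of_forall hC)

lemma norm_cpowBernoulli {δ : ℂ} (r : ℕ) {x : ℝ} (hx : 0 < x) :
    ‖cpowBernoulli δ r x‖ = x ^ δ.re * ‖perBernoulli r x‖ := by
  rw [cpowBernoulli, norm_mul, Complex.norm_cpow_eq_rpow_re_of_pos hx]

lemma locBdd_cpowBernoulli {δ : ℂ} (hδ : 0 ≤ δ.re) (r : ℕ) : LocBdd (cpowBernoulli δ r) := by
  intro X hX
  obtain ⟨C, hC0, hC⟩ := exists_norm_perBernoulli_le r
  refine ⟨intervalIntegrable_cpowBernoulli r (Or.inl hδ), X ^ δ.re * C, fun x hx => ?_⟩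
  rw [norm_cpowBernoulli r hx.1]
  exact mul_le_mul (Real.rpow_le_rpow hx.1.le hx.2 hδ) (hC x) (norm_nonneg _) (by positivity)

lemma tendsto_cpowBernoulli {δ : ℂ} (hδ : δ.re < 0) (r : ℕ) :
    Tendsto (cpowBernoulli δ r) atTop (nhds 0) := by
  obtain ⟨C, hC0, hC⟩ := exists_norm_perBernoulli_le r
  have h := (tendsto_rpow_neg_atTop (neg_pos.2 hδ)).mul_const C
  rw [neg_neg, zero_mul] at h
  refine squeeze_zero_norm' ?_ h
  filter_upwards [eventually_gt_atTop 0] with x hx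
  rw [norm_cpowBernoulli r hx]
  exact mul_le_mul_of_nonneg_left (hC x) (by positivity)

/-! ### Integration by parts and the recursion -/

/-- Integration by parts for `x^δ · B_r({x}) / r!`. The interval may start at `0` when
`1 ≤ Re δ`. -/
lemma integral_cpowBernoulli {δ : ℂ} {r : ℕ} (hr : 1 ≤ r) {a b : ℝ} (ha : 0 ≤ a) (hab : a ≤ b)
    (h : 1 ≤ δ.re ∨ 0 < a) :
    ∫ t in a..b, cpowBernoulli δ r t =
      cpowBernoulli δ (r + 1) b - cpowBernoulli δ (r + 1) a -
        δ * ∫ t in a..b, cpowBernoulli (δ - 1) (r + 1) t := by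
  have hmem : 0 < a → (0:ℝ) ∉ uIcc a b := fun h0 hmem => by
    rw [uIcc_of_le hab] at hmem
    exact absurd hmem.1 (not_le.2 h0)
  have i1 : IntervalIntegrable (cpowBernoulli δ r) volume a b :=
    intervalIntegrable_cpowBernoulli r (h.imp (fun h => by linarith) hmem)
  have i2 : IntervalIntegrable (cpowBernoulli (δ - 1) (r + 1)) volume a b :=
    intervalIntegrable_cpowBernoulli _ (h.imp (fun h => by simpa using h) hmem)
  have key : ∫ t in a..b, (δ * cpowBernoulli (δ - 1) (r + 1) t + cpowBernoulli δ r t) =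
      cpowBernoulli δ (r + 1) b - cpowBernoulli δ (r + 1) a := by
    refine integral_eq_sub_of_hasDeriv_right_of_le hab ?_ ?_ ((i2.const_mul δ).add i1)
    · refine ContinuousOn.mul (fun x hx => ?_) (continuous_perBernoulli_succ hr).continuousOn
      exact (Complex.continuousAt_ofReal_cpow_const _ _ (h.imp (fun h => by linarith)
        fun h => (h.trans_le hx.1).ne')).continuousWithinAt
    · intro x hx
      have hx0 : 0 < x := ha.trans_lt hx.1
      have h1 : HasDerivAt (fun y : ℝ => (y : ℂ) ^ δ) (δ * (x : ℂ) ^ (δ - 1)) x := by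
        have := ((hasDerivAt_id (x : ℂ)).cpow_const (c := δ)
          (Complex.ofReal_mem_slitPlane.2 hx0)).comp_ofReal
        simpa using this
      have h2 := h1.hasDerivWithinAt.mul (hasDerivWithinAt_perBernoulli_succ r x)
      refine h2.congr_deriv ?_
      simp only [cpowBernoulli]
      ring
  rw [intervalIntegral.integral_add (i2.const_mul δ) i1, intervalIntegral.integral_const_mul] at key
  rw [← key]
  ring

/-- The recursion on `(0, ∞)`: averaging trades one power of `x` for one Bernoulli index. -/
lemma cesaro_cpowBernoulli {δ : ℂ} (hδ : 1 ≤ δ.re) {r : ℕ} (hr : 1 ≤ r) {x : ℝ} (hx : 0 < x) :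
    cesaro (cpowBernoulli δ r) x = cpowBernoulli (δ - 1) (r + 1) x -
      δ * cesaro (cpowBernoulli (δ - 1) (r + 1)) x := by
  have hδ0 : δ ≠ 0 := fun h => by simp [h] at hδ; linarith
  have hx0 : (x : ℂ) ≠ 0 := Complex.ofReal_ne_zero.2 hx.ne'
  have h0 : cpowBernoulli δ (r + 1) 0 = 0 := by
    simp [cpowBernoulli, Complex.zero_cpow hδ0]
  rw [cesaro, cesaro, integral_cpowBernoulli hr le_rfl hx.le (Or.inl hδ), h0]
  simp only [cpowBernoulli, Complex.cpow_sub _ _ hx0, Complex.cpow_one]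
  field_simp
  ring

/-! ### The limit -/

/-- One averaging suffices when `0 ≤ Re δ < 1`. -/
lemma tendsto_cesaro_cpowBernoulli {δ : ℂ} (h0 : 0 ≤ δ.re) (h1 : δ.re < 1) {r : ℕ} (hr : 1 ≤ r) :
    Tendsto (cesaro (cpowBernoulli δ r)) atTop (nhds 0) := by
  -- `x^(δ-1)` need not be integrable at `0`, so the parts formula is used on `[1, x]` only.
  set g : ℝ → ℂ := indicator (Ioi 1) (cpowBernoulli (δ - 1) (r + 1)) with hg
  have hre : (δ - 1).re < 0 := by simpa using h1
  have gb : LocBdd g := by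
    intro X hX
    obtain ⟨C, hC0, hC⟩ := exists_norm_perBernoulli_le (r + 1)
    have hbd : ∀ x, ‖g x‖ ≤ C := by
      intro x
      by_cases hx : x ∈ Ioi (1:ℝ)
      · rw [hg, indicator_of_mem hx, norm_cpowBernoulli _ (zero_lt_one.trans hx)]
        have := Real.rpow_le_one_of_one_le_of_nonpos (le_of_lt hx) hre.le
        calc _ ≤ 1 * C := mul_le_mul this (hC x) (norm_nonneg _) zero_le_one
          _ = C := one_mul C
      · rw [hg, indicator_of_notMem hx, norm_zero]
        exact hC0
    refine ⟨?_, C, fun x _ => hbd x⟩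
    have hm : Measurable g :=
      (((Complex.measurable_ofReal).pow_const _).mul (measurable_perBernoulli _)).indicator
        measurableSet_Ioi
    rw [intervalIntegrable_iff_integrableOn_Ioc_of_le hX]
    exact IntegrableOn.of_bound (by simp) hm.aestronglyMeasurable C
      (Filter.Eventually.of_forall hbd)
  have gt : Tendsto g atTop (nhds 0) := by
    refine (tendsto_cpowBernoulli hre (r + 1)).congr' ?_
    filter_upwards [eventually_gt_atTop 1] with x hx
    rw [hg, indicator_of_mem (mem_Ioi.2 hx)]
  have hinv : Tendsto (fun x : ℝ => (x : ℂ)⁻¹) atTop (nhds 0) := by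
    have := (Complex.continuous_ofReal.tendsto 0).comp tendsto_inv_atTop_zero
    simpa [Function.comp_def] using this
  obtain ⟨K, hK⟩ : ∃ K, K = (∫ t in (0:ℝ)..1, cpowBernoulli δ r t) - cpowBernoulli δ (r + 1) 1 :=
    ⟨_, rfl⟩
  have lim := ((hinv.mul_const K).add (tendsto_cpowBernoulli hre (r + 1))).sub
    ((gb.tendsto_cesaro gt).const_mul δ)
  simp only [zero_mul, mul_zero, add_zero, sub_zero] at lim
  refine lim.congr' ?_
  filter_upwards [eventually_gt_atTop 1] with x hx
  have hx0 : (x : ℂ) ≠ 0 := Complex.ofReal_ne_zero.2 (by linarith)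
  have hgi : ∫ t in (0:ℝ)..x, g t = ∫ t in (1:ℝ)..x, cpowBernoulli (δ - 1) (r + 1) t := by
    rw [← integral_add_adjacent_intervals (gb.intervalIntegrable le_rfl zero_le_one)
      (gb.intervalIntegrable zero_le_one (by linarith)),
      integral_congr_Ioo_of_le (f := g) (g := fun _ => 0) zero_le_one
        fun t ht => indicator_of_notMem (s := Ioi 1) (not_lt.2 ht.2.le) _,
      integral_congr_Ioo_of_le (f := g) hx.le
        fun t ht => indicator_of_mem (mem_Ioi.2 ht.1) _]
    simp
  have hf := locBdd_cpowBernoulli h0 r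
  rw [cesaro, cesaro, hgi, ← integral_add_adjacent_intervals
    (hf.intervalIntegrable le_rfl zero_le_one) (hf.intervalIntegrable zero_le_one (by linarith)),
    integral_cpowBernoulli hr zero_le_one hx.le (Or.inr zero_lt_one), hK]
  simp only [cpowBernoulli, Complex.cpow_sub _ _ hx0, Complex.cpow_one]
  field_simp
  ring

/-- The case `δ = 0` is included: it is reached by the recursion from `δ = 1`. -/
lemma tendsto_cesaro_iterate_cpowBernoulli (n : ℕ) : ∀ (δ : ℂ) (r : ℕ), 1 ≤ r → (n : ℝ) ≤ δ.re →
    δ.re < n + 1 → Tendsto (cesaro^[n + 1] (cpowBernoulli δ r)) atTop (nhds 0) := by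
  induction n with
  | zero =>
    intro δ r hr h0 h1
    exact tendsto_cesaro_cpowBernoulli (by simpa using h0) (by simpa using h1) hr
  | succ n ih =>
    intro δ r hr h0 h1
    push_cast at h0 h1
    have hn : (0:ℝ) ≤ n := n.cast_nonneg
    have hv : LocBdd (cpowBernoulli (δ - 1) (r + 1)) :=
      locBdd_cpowBernoulli (by rw [Complex.sub_re, Complex.one_re]; linarith) _
    have hlim := ih (δ - 1) (r + 1) (by omega) (by rw [Complex.sub_re, Complex.one_re]; linarith)
      (by rw [Complex.sub_re, Complex.one_re]; linarith)
    have hlim2 := (hv.iterate (n + 1)).tendsto_cesaro hlim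
    have lim := hlim.sub (hlim2.const_mul δ)
    rw [mul_zero, sub_zero] at lim
    refine lim.congr' ?_
    filter_upwards [eventually_gt_atTop 0] with x hx
    rw [Function.iterate_succ_apply _ (n + 1), cesaro_iterate_sub_mul δ hv hv.cesaro
      (fun y hy => cesaro_cpowBernoulli (by linarith) hr hy) (n + 1) x hx,
      ← Function.iterate_succ_apply, Function.iterate_succ_apply' _ (n + 1)]

end

/-- For `δ ∈ ℂ` with `Re δ ≥ 0`, `δ ≠ 0`, and `r ≥ 1` an integer,
with `m = ⌊Re δ⌋ + 1`, the `m`-fold iterate of the Cesàro operator applied to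
`x ↦ x^δ · B_r({x})/r!` tends to `0` as `x → ∞`. -/
theorem cesaro_iterate_cpow_mul_bernoulli_tendsto_zero
    (δ : ℂ) (hre : 0 ≤ δ.re) (hδ : δ ≠ 0) (r : ℕ) (hr : 1 ≤ r) :
    Tendsto (cesaro^[⌊δ.re⌋.toNat + 1]
        (fun x : ℝ => (x : ℂ) ^ δ *
          (Polynomial.aeval ((Int.fract x : ℝ) : ℂ) (Polynomial.bernoulli r)) /
            (r.factorial : ℂ)))
      atTop (nhds 0) := by
  have hfun : (fun x : ℝ => (x : ℂ) ^ δ *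
      (Polynomial.aeval ((Int.fract x : ℝ) : ℂ) (Polynomial.bernoulli r)) / (r.factorial : ℂ)) =
      cpowBernoulli δ r := by
    funext x
    have : (Polynomial.aeval ((Int.fract x : ℝ) : ℂ) (Polynomial.bernoulli r)) =
        ((bernoulliFun r (Int.fract x) : ℝ) : ℂ) := by
      rw [bernoulliFun, Polynomial.eval_map_algebraMap, ← Complex.coe_algebraMap,
        Polynomial.aeval_algebraMap_apply]
    rw [this, cpowBernoulli, perBernoulli, mul_div_assoc]
    push_cast
    rfl
  rw [hfun]
  have hfl : ((⌊δ.re⌋.toNat : ℕ) : ℝ) = (⌊δ.re⌋ : ℝ) := by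
    exact_mod_cast Int.toNat_of_nonneg (Int.floor_nonneg.2 hre)
  refine tendsto_cesaro_iterate_cpowBernoulli _ δ r hr ?_ ?_ <;> rw [hfl]
  · exact Int.floor_le _
  · exact Int.lt_floor_add_one _
end

section
/- For every s ∈ ℂ with Re(s) < 1, the integral of the Hurwitz zeta function over one period of its shift parameter vanishes: ∫₀¹ ζ_H(a, s) da = 0, where for each a ∈ (0,1] the value ζ_H(a, s) is the analytic continuation in s of ∑_{n=0}^∞ (n+a)^{−s}. -/
/-!
The proof rests on the distribution relation
`ζ_H(a/2, s) + ζ_H((a+1)/2, s) = 2 ^ s * ζ_H(a, s)`. For `1 < re s` it is the splitting of the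
defining series into even and odd indices; it extends to all `s ≠ 1` by the identity theorem.
Write `I` for the integral over a period. Integrating the relation over `a ∈ [0, 1]`, the
substitutions `a ↦ a/2` and `a ↦ (a+1)/2` turn the left-hand side into `2 * I`, hence
`2 * I = 2 ^ s * I`. As `‖2 ^ s‖ = 2 ^ re s < 2` when `re s < 1`, this forces `I = 0`.

Integrability is needed only to add the integrals over `[0, 1/2]` and `[1/2, 1]`. It does not have
to be established: if it fails, the Bochner integral is zero by convention.
-/

open HurwitzZeta

/-- The distribution relation in the half-plane of absolute convergence. -/
lemma hurwitzZeta_half_add_of_one_lt_re {a : ℝ} (ha : a ∈ Set.Icc (0 : ℝ) 1) {s : ℂ}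
    (hs : 1 < s.re) :
    hurwitzZeta ((a / 2 : ℝ) : UnitAddCircle) s +
      hurwitzZeta (((a + 1) / 2 : ℝ) : UnitAddCircle) s =
        2 ^ s * hurwitzZeta (a : UnitAddCircle) s := by
  obtain ⟨h0, h1⟩ := ha
  have hscale : ∀ x : ℝ, 0 ≤ x → 1 / ((x : ℂ) / 2) ^ s = 2 ^ s * (1 / (x : ℂ) ^ s) := by
    intro x hx
    have h2 : (2 : ℂ) ^ s ≠ 0 := by simp [Complex.cpow_eq_zero_iff]
    have := Complex.mul_cpow_ofReal_nonneg (a := 2) (b := x / 2) (by norm_num) (by positivity) s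
    push_cast at this
    rw [mul_div_cancel₀ _ (two_ne_zero' ℂ)] at this
    rw [this, one_div, one_div, mul_inv, mul_inv_cancel_left₀ h2]
  have hE := hasSum_hurwitzZeta_of_one_lt_re (a := a / 2) ⟨by linarith, by linarith⟩ hs
  have hO := hasSum_hurwitzZeta_of_one_lt_re (a := (a + 1) / 2) ⟨by linarith, by linarith⟩ hs
  have hA := (hasSum_hurwitzZeta_of_one_lt_re ⟨h0, h1⟩ hs).mul_left ((2 : ℂ) ^ s)
  refine (HasSum.even_add_odd ?_ ?_).unique hA
  · convert hE using 2 with n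
    rw [← Complex.ofReal_natCast (2 * n), ← Complex.ofReal_add, ← hscale _ (by positivity)]
    push_cast
    congr 2
    ring
  · convert hO using 2 with n
    rw [← Complex.ofReal_natCast (2 * n + 1), ← Complex.ofReal_add, ← hscale _ (by positivity)]
    push_cast
    congr 2
    ring

/-- The distribution relation for all `s ≠ 1`, by analytic continuation along the connected set
`ℂ \ {1}`. -/
lemma hurwitzZeta_half_add {a : ℝ} (ha : a ∈ Set.Icc (0 : ℝ) 1) {s : ℂ} (hs : s ≠ 1) :
    hurwitzZeta ((a / 2 : ℝ) : UnitAddCircle) s +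
      hurwitzZeta (((a + 1) / 2 : ℝ) : UnitAddCircle) s =
        2 ^ s * hurwitzZeta (a : UnitAddCircle) s := by
  have hopen : IsOpen ({1}ᶜ : Set ℂ) := isOpen_compl_singleton
  have hz (b : UnitAddCircle) : DifferentiableOn ℂ (hurwitzZeta b) {1}ᶜ :=
    fun z hz ↦ (differentiableAt_hurwitzZeta b hz).differentiableWithinAt
  have hpow : DifferentiableOn ℂ (fun z : ℂ ↦ (2 : ℂ) ^ z) {1}ᶜ := fun z _ ↦
    (differentiableAt_id.const_cpow (Or.inl two_ne_zero)).differentiableWithinAt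
  have hconn : IsPreconnected ({1}ᶜ : Set ℂ) :=
    (isConnected_compl_singleton_of_one_lt_rank (by simp) 1).isPreconnected
  refine (((hz _).add (hz _)).analyticOnNhd hopen).eqOn_of_preconnected_of_eventuallyEq
    ((hpow.mul (hz _)).analyticOnNhd hopen) hconn (z₀ := 2) (by simp) ?_ hs
  filter_upwards [(isOpen_lt continuous_const Complex.continuous_re).mem_nhds
    (show (1 : ℝ) < (2 : ℂ).re by norm_num)] with z hz
  exact hurwitzZeta_half_add_of_one_lt_re ha hz

/-- For every `s ∈ ℂ` with `Re s < 1`, the integral of the Hurwitz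
zeta function over one period of its shift parameter vanishes:
`∫₀¹ ζ_H(a, s) da = 0`. -/
theorem integral_hurwitzZeta_eq_zero (s : ℂ) (hs : s.re < 1) :
    ∫ a in (0:ℝ)..1, hurwitzZeta (a : UnitAddCircle) s = 0 := by
  set f : ℝ → ℂ := fun a ↦ hurwitzZeta (a : UnitAddCircle) s with hf
  by_cases hint : IntervalIntegrable f MeasureTheory.volume 0 1
  swap
  · exact intervalIntegral.integral_undef hint
  have hs1 : s ≠ 1 := by
    rintro rfl
    simp at hs
  have hl : IntervalIntegrable f MeasureTheory.volume 0 (1 / 2) :=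
    hint.mono_set (by rw [Set.uIcc_of_le, Set.uIcc_of_le] <;> norm_num [Set.Icc_subset_Icc_iff])
  have hr : IntervalIntegrable f MeasureTheory.volume (1 / 2) 1 :=
    hint.mono_set (by rw [Set.uIcc_of_le, Set.uIcc_of_le] <;> norm_num [Set.Icc_subset_Icc_iff])
  have hl' : IntervalIntegrable (fun a ↦ f (a / 2)) MeasureTheory.volume 0 1 := by
    simpa [div_eq_inv_mul] using hl.comp_mul_left (c := (2 : ℝ)⁻¹)
  have hr' : IntervalIntegrable (fun a ↦ f ((a + 1) / 2)) MeasureTheory.volume 0 1 := by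
    have h := (hr.comp_mul_left (c := (2 : ℝ)⁻¹)).comp_add_right 1
    norm_num at h
    simpa [div_eq_inv_mul] using h
  have hkey : (2 : ℂ) * ∫ a in (0:ℝ)..1, f a = 2 ^ s * ∫ a in (0:ℝ)..1, f a := by
    calc (2 : ℂ) * ∫ a in (0:ℝ)..1, f a
        = 2 * (∫ a in (0:ℝ)..(1 / 2), f a) + 2 * ∫ a in (1 / 2 : ℝ)..1, f a := by
          rw [← mul_add, intervalIntegral.integral_add_adjacent_intervals hl hr]
      _ = (∫ a in (0:ℝ)..1, f (a / 2)) + ∫ a in (0:ℝ)..1, f ((a + 1) / 2) := by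
          have e1 := intervalIntegral.integral_comp_div (a := 0) (b := 1) f (two_ne_zero' ℝ)
          have e2 := intervalIntegral.integral_comp_add_right (a := 0) (b := 1)
            (fun a ↦ f (a / 2)) 1
          rw [intervalIntegral.integral_comp_div f (two_ne_zero' ℝ)] at e2
          rw [e1, e2]
          norm_num
      _ = ∫ a in (0:ℝ)..1, (f (a / 2) + f ((a + 1) / 2)) :=
          (intervalIntegral.integral_add hl' hr').symm
      _ = ∫ a in (0:ℝ)..1, 2 ^ s * f a := by
          refine intervalIntegral.integral_congr fun a ha ↦ ?_
          rw [Set.uIcc_of_le zero_le_one] at ha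
          exact hurwitzZeta_half_add ha hs1
      _ = 2 ^ s * ∫ a in (0:ℝ)..1, f a := intervalIntegral.integral_const_mul _ _
  have hne : (2 : ℂ) ≠ 2 ^ s := by
    intro h
    have hnorm : ‖(2 : ℂ) ^ s‖ = 2 ^ s.re := by
      simpa using Complex.norm_cpow_eq_rpow_re_of_pos (x := 2) two_pos s
    have hlt : (2 : ℝ) ^ s.re < 2 := by
      simpa using Real.rpow_lt_rpow_of_exponent_lt one_lt_two hs
    rw [← hnorm, ← h] at hlt
    simp at hlt
  by_contra hI
  exact hne (mul_right_cancel₀ hI hkey)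
end

section
/- Let ρ ∈ ℂ with Re(ρ) > −1 and let n be a nonzero integer. Then ∫₀¹ ζ_H(1−α, −ρ) e^{−2πinα} dα = Γ(ρ+1)/(−2πin)^{ρ+1}, where the complex power on the right is the principal branch. (Equivalently: the n-th Fourier coefficient of the period-1 function q̌_ρ(α) = e^{iπρ} ζ_H(1−α, −ρ) equals e^{iπρ} Γ(ρ+1)/(−2πin)^{ρ+1}.) -/
open HurwitzZeta Real

/-!
For `Re ρ > 0`, Hurwitz's formula with `w = ρ + 1` writes `ζ_H(a, 1 - w)` as a combination of the
absolutely convergent series `∑ e^{±2πima} m^{-w}`. Integrating termwise against `e^{2πina}`, where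
`a = 1 - α`, leaves the single term `m = |n|`, and the sign of `n` selects the factor
`e^{±πiw/2}`, which comes from the argument `∓π/2` of `-2πin` in the principal power
(`integral_hurwitzZeta_of_one_lt_re`).

For `-1 < Re ρ ≤ 0` the identity is continued analytically in `s = -ρ` through the strip
`-1 < Re s < 1`. The integral is holomorphic there because `|ζ_H(a, s)| ≤ a^{-r} + C` locally
uniformly in `s`, with `r < 1` (`norm_hurwitzZeta_le`). This bound, and the continuity of
`ζ_H(a, s)` in `a`, come from summing the Dirichlet series by the trapezoidal rule: the errors are
`O(n^{-Re s - 2})`, so the resulting expression `eulerMaclaurinZeta` is holomorphic in `-1 < Re s`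
away from `s = 1` and equals `ζ_H(a, s)` there (`hurwitzZeta_eq_eulerMaclaurinZeta`).
-/

open Set Filter Topology MeasureTheory

/-! ### The trapezoidal rule and the Hurwitz zeta function on `-1 < Re s` -/

/-- The error of the trapezoidal rule on `[x, x + 1]` for the integral of `y ^ (-s)`, the value of
the integral being written through the primitive `y ^ (1 - s) / (1 - s)` (so `s ≠ 1` is needed). -/
noncomputable def trapError (s : ℂ) (x : ℝ) : ℂ :=
  (1 / 2) * (((x : ℝ) : ℂ) ^ (-s) + ((x + 1 : ℝ) : ℂ) ^ (-s)) -
    (((x + 1 : ℝ) : ℂ) ^ (1 - s) - ((x : ℝ) : ℂ) ^ (1 - s)) / (1 - s)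

lemma hasDerivAt_add_cpow {x t : ℝ} (hxt : 0 < x + t) (r : ℂ) :
    HasDerivAt (fun t : ℝ => ((x + t : ℝ) : ℂ) ^ r) (r * ((x + t : ℝ) : ℂ) ^ (r - 1)) t := by
  have h2 : HasDerivAt (fun y : ℝ => ((x + y : ℝ) : ℂ)) 1 t :=
    ((hasDerivAt_id t).const_add x).ofReal_comp
  have h3 := (hasDerivAt_id ((x + t : ℝ) : ℂ)).cpow_const (c := r) (Or.inl (by simpa using hxt))
  have h4 := h3.comp_of_eq t h2 rfl
  simp only [id, mul_one] at h4
  exact h4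

/-- The trapezoidal error is bounded by the size of the second derivative of `y ^ (-s)`: it is the
value at `1` of the error `h t` on `[x, x + t]`, which satisfies `h 0 = h' 0 = 0` and
`h'' t = (t / 2) * s * (s + 1) * (x + t) ^ (-s - 2)`. -/
lemma norm_trapError_le {s : ℂ} (hs : s ≠ 1) (hs2 : -2 ≤ s.re) {x : ℝ} (hx : 0 < x) :
    ‖trapError s x‖ ≤ ‖s‖ * ‖s + 1‖ * x ^ (-s.re - 2) := by
  have hs1 : 1 - s ≠ 0 := sub_ne_zero.mpr hs.symm
  -- `k` is the derivative of the error function `h` below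
  set M := ‖s‖ * ‖s + 1‖ * x ^ (-s.re - 2) with hM
  have hM0 : 0 ≤ M := by positivity
  have hpos : ∀ t ∈ Icc (0 : ℝ) 1, 0 < x + t := fun t ht => by linarith [ht.1]
  let k : ℝ → ℂ := fun t => (1 / 2) * (((x : ℝ) : ℂ) ^ (-s) - ((x + t : ℝ) : ℂ) ^ (-s)) +
    (1 / 2) * t * (-s * ((x + t : ℝ) : ℂ) ^ (-s - 1))
  have hk : ∀ t ∈ Icc (0 : ℝ) 1, HasDerivAt k
      ((1 / 2) * t * (s * (s + 1) * ((x + t : ℝ) : ℂ) ^ (-s - 1 - 1))) t := by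
    intro t ht
    have h1 := hasDerivAt_add_cpow (hpos t ht) (-s)
    have h2 := hasDerivAt_add_cpow (hpos t ht) (-s - 1)
    have h0 : HasDerivAt (fun t : ℝ => (t : ℂ)) 1 t := Complex.ofRealCLM.hasDerivAt
    have := ((h1.const_sub (((x : ℝ) : ℂ) ^ (-s))).const_mul (1 / 2 : ℂ)).add
      ((h0.const_mul (1 / 2 : ℂ)).mul (h2.const_mul (-s)))
    refine this.congr_deriv ?_
    ring
  have hk' : ∀ t ∈ Icc (0 : ℝ) 1, ‖k t‖ ≤ M := by
    intro t ht
    have := norm_image_sub_le_of_norm_deriv_le_segment' (f := k) (C := M)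
      (fun y hy => (hk y hy).hasDerivWithinAt) (fun y hy => ?_) t ht
    · have h0 : k 0 = 0 := by simp [k]
      rw [h0, sub_zero] at this
      nlinarith [ht.2]
    · have hy' : y ∈ Icc (0 : ℝ) 1 := Ico_subset_Icc_self hy
      rw [norm_mul, norm_mul, norm_mul, norm_mul, Complex.norm_cpow_eq_rpow_re_of_pos (hpos y hy')]
      have e : (-s - 1 - 1).re = -s.re - 2 := by simp; ring
      rw [e, hM]
      have h1 : (x + y) ^ (-s.re - 2) ≤ x ^ (-s.re - 2) :=
        Real.rpow_le_rpow_of_nonpos hx (by linarith [hy.1]) (by linarith)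
      have h2 : ‖(1 / 2 : ℂ)‖ * ‖(y : ℂ)‖ ≤ 1 := by
        rw [Complex.norm_real, Real.norm_of_nonneg hy.1]
        norm_num
        linarith [hy.2]
      calc _ ≤ 1 * (‖s‖ * ‖s + 1‖ * (x + y) ^ (-s.re - 2)) := by
            have := hpos y hy'
            gcongr
        _ ≤ _ := by rw [one_mul]; gcongr
  let h : ℝ → ℂ := fun t => (1 / 2) * t * (((x : ℝ) : ℂ) ^ (-s) + ((x + t : ℝ) : ℂ) ^ (-s)) -
    (((x + t : ℝ) : ℂ) ^ (1 - s) - ((x : ℝ) : ℂ) ^ (1 - s)) / (1 - s)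
  have hh : ∀ t ∈ Icc (0 : ℝ) 1, HasDerivAt h (k t) t := by
    intro t ht
    have h1 := hasDerivAt_add_cpow (hpos t ht) (-s)
    have h2 := hasDerivAt_add_cpow (hpos t ht) (1 - s)
    have h0 : HasDerivAt (fun t : ℝ => (t : ℂ)) 1 t := Complex.ofRealCLM.hasDerivAt
    have := ((h0.const_mul (1 / 2 : ℂ)).mul (h1.const_add (((x : ℝ) : ℂ) ^ (-s)))).sub
      ((h2.sub_const (((x : ℝ) : ℂ) ^ (1 - s))).div_const (1 - s))
    refine this.congr_deriv ?_
    simp only [k]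
    rw [mul_div_cancel_left₀ _ hs1, show 1 - s - 1 = -s by ring]
    ring
  have := norm_image_sub_le_of_norm_deriv_le_segment_01' (f := h) (C := M)
      (fun y hy => (hh y hy).hasDerivWithinAt) (fun y hy => hk' y (Ico_subset_Icc_self hy))
  have h0 : h 0 = 0 := by simp [h]
  have h1 : h 1 = trapError s x := by simp [h, trapError]
  rwa [h0, sub_zero, h1] at this

lemma differentiableAt_trapError {s : ℂ} (hs : s ≠ 1) {x : ℝ} (hx : 0 < x) :
    DifferentiableAt ℂ (fun s => trapError s x) s := by
  have hx0 : (x : ℂ) ≠ 0 := by exact_mod_cast hx.ne'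
  have hx1 : ((x + 1 : ℝ) : ℂ) ≠ 0 := by exact_mod_cast (by linarith : (0 : ℝ) < x + 1).ne'
  have hs1 : 1 - s ≠ 0 := sub_ne_zero.mpr hs.symm
  unfold trapError
  fun_prop (disch := first | assumption | exact Or.inl hx0 | exact Or.inl hx1)

lemma continuousOn_trapError (s : ℂ) : ContinuousOn (trapError s) (Ioi 0) := by
  have h1 (r : ℂ) : ContinuousOn (fun x : ℝ => ((x : ℝ) : ℂ) ^ r) (Ioi 0) := fun x hx => by
    simpa using (hasDerivAt_add_cpow (x := 0) (t := x) (by simpa using hx)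
      r).continuousAt.continuousWithinAt (s := Ioi 0)
  have h2 (r : ℂ) : ContinuousOn (fun x : ℝ => ((x + 1 : ℝ) : ℂ) ^ r) (Ioi 0) :=
    (h1 r).comp (by fun_prop) (fun x hx => by simp only [mem_Ioi] at *; linarith)
  unfold trapError
  exact ((h1 _).add (h2 _)).const_smul (1 / 2 : ℂ) |>.sub (((h2 _).sub (h1 _)).div_const _)

/-- The Euler–Maclaurin expression for `ζ_H(a, s)`, meaningful for `-1 < Re s` and `s ≠ 1`. The
term `n = 0` of the Dirichlet series is left outside of the sum, so that the remaining terms are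
bounded uniformly in `a ∈ (0, 1)`. -/
noncomputable def eulerMaclaurinZeta (a : ℝ) (s : ℂ) : ℂ :=
  (a : ℂ) ^ (-s) + (1 / 2) * ((1 + a : ℝ) : ℂ) ^ (-s) - ((1 + a : ℝ) : ℂ) ^ (1 - s) / (1 - s) +
    ∑' n : ℕ, trapError s (n + 1 + a)

lemma norm_trapError_le_of_re {s : ℂ} (hs : s ≠ 1) {r C a : ℝ} (hr : -r ≤ s.re) (hr1 : r < 1)
    (hC : ‖s‖ ≤ C) (ha : 0 < a) (n : ℕ) :
    ‖trapError s (n + 1 + a)‖ ≤ C * (C + 1) * ((n + 1 : ℕ) : ℝ) ^ (r - 2) := by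
  refine (norm_trapError_le hs (by linarith) (by positivity)).trans ?_
  have hC0 : 0 ≤ C := (norm_nonneg _).trans hC
  have h1 : ‖s + 1‖ ≤ C + 1 := (norm_add_le _ _).trans (by simpa using hC)
  have h2 : ((n : ℝ) + 1 + a) ^ (-s.re - 2) ≤ ((n + 1 : ℕ) : ℝ) ^ (r - 2) := by
    calc ((n : ℝ) + 1 + a) ^ (-s.re - 2) ≤ ((n : ℝ) + 1 + a) ^ (r - 2) :=
          Real.rpow_le_rpow_of_exponent_le (by linarith [n.cast_nonneg (α := ℝ)]) (by linarith)
      _ ≤ _ := Real.rpow_le_rpow_of_nonpos (by positivity) (by push_cast; linarith) (by linarith)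
  gcongr

lemma summable_trapError_bound {r : ℝ} (hr1 : r < 1) (C : ℝ) :
    Summable (fun n : ℕ => C * (C + 1) * ((n + 1 : ℕ) : ℝ) ^ (r - 2)) :=
  ((summable_nat_add_iff 1).mpr (Real.summable_nat_rpow.mpr (by linarith))).mul_left _

/-- Partial sums of the trapezoidal errors; the primitives telescope. -/
lemma sum_trapError (s : ℂ) (a : ℝ) (N : ℕ) :
    ∑ n ∈ Finset.range N, trapError s (n + 1 + a) =
      ∑ n ∈ Finset.range N, ((n + 1 + a : ℝ) : ℂ) ^ (-s) +
      (1 / 2) * (((N + 1 + a : ℝ) : ℂ) ^ (-s) - ((1 + a : ℝ) : ℂ) ^ (-s)) -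
      (((N + 1 + a : ℝ) : ℂ) ^ (1 - s) - ((1 + a : ℝ) : ℂ) ^ (1 - s)) / (1 - s) := by
  induction N with
  | zero => simp
  | succ N ih =>
    rw [Finset.sum_range_succ, Finset.sum_range_succ, ih, trapError,
      show ((N : ℝ) + 1 + a + 1) = ((N + 1 : ℕ) : ℝ) + 1 + a by push_cast; ring]
    ring

lemma tendsto_natCast_add_cpow {z : ℂ} (hz : z.re < 0) (a : ℝ) (ha : 0 < a) :
    Tendsto (fun N : ℕ => ((N + 1 + a : ℝ) : ℂ) ^ z) atTop (𝓝 0) := by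
  rw [tendsto_zero_iff_norm_tendsto_zero]
  have h : Tendsto (fun N : ℕ => (N : ℝ) + 1 + a) atTop atTop :=
    tendsto_atTop_add_const_right _ _ (tendsto_atTop_add_const_right _ _ tendsto_natCast_atTop_atTop)
  have := (tendsto_rpow_neg_atTop (y := -z.re) (by linarith)).comp h
  refine this.congr fun N => ?_
  rw [Complex.norm_cpow_eq_rpow_re_of_pos (by positivity)]
  simp

lemma hurwitzZeta_eq_of_one_lt_re {a : ℝ} (ha : a ∈ Ioo (0 : ℝ) 1) {s : ℂ} (hs : 1 < s.re) :
    hurwitzZeta a s = eulerMaclaurinZeta a s := by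
  have hs1 : s ≠ 1 := by rintro rfl; simp at hs
  have hsum := hasSum_hurwitzZeta_of_one_lt_re (Ioo_subset_Icc_self ha) hs
  rw [← hasSum_nat_add_iff' 1] at hsum
  have hsum' : HasSum (fun n : ℕ => ((n + 1 + a : ℝ) : ℂ) ^ (-s))
      (hurwitzZeta a s - (a : ℂ) ^ (-s)) := by
    simpa [Complex.cpow_neg] using hsum
  have h1 := hsum'.tendsto_sum_nat
  have h2 := tendsto_natCast_add_cpow (z := -s) (by simp; linarith) a ha.1
  have h3 := tendsto_natCast_add_cpow (z := 1 - s) (by simp; linarith) a ha.1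
  have hlim := (h1.add ((h2.sub_const (((1 + a : ℝ) : ℂ) ^ (-s))).const_mul (1 / 2 : ℂ))).sub
    ((h3.sub_const (((1 + a : ℝ) : ℂ) ^ (1 - s))).div_const (1 - s))
  have hS : Summable (fun n : ℕ => trapError s (n + 1 + a)) :=
    .of_norm_bounded (summable_trapError_bound (r := 0) (by norm_num) ‖s‖)
      (norm_trapError_le_of_re hs1 (by linarith) (by norm_num) le_rfl ha.1)
  have hS' := hS.hasSum.tendsto_sum_nat
  simp only [sum_trapError] at hS'
  have := tendsto_nhds_unique hlim hS'
  rw [eulerMaclaurinZeta, ← this]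
  ring

lemma differentiableAt_eulerMaclaurinZeta {a : ℝ} (ha : 0 < a) {s : ℂ} (hs : -1 < s.re)
    (hs1 : s ≠ 1) : DifferentiableAt ℂ (eulerMaclaurinZeta a) s := by
  have ha0 : (a : ℂ) ≠ 0 := by exact_mod_cast ha.ne'
  have ha1 : ((1 + a : ℝ) : ℂ) ≠ 0 := by exact_mod_cast (by linarith : (0 : ℝ) < 1 + a).ne'
  have hs0 : 1 - s ≠ 0 := sub_ne_zero.mpr hs1.symm
  obtain ⟨r, hr, hr1⟩ : ∃ r : ℝ, -s.re < r ∧ r < 1 := exists_between (by linarith)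
  let U : Set ℂ := ({z | -r < z.re} ∩ Metric.ball 0 (‖s‖ + 1)) ∩ {1}ᶜ
  have hU : IsOpen U := ((isOpen_lt continuous_const Complex.continuous_re).inter
    Metric.isOpen_ball).inter isOpen_compl_singleton
  have hsU : s ∈ U := ⟨⟨by simp only [mem_ofPred_eq]; linarith, by simp⟩, hs1⟩
  have htsum : DifferentiableOn ℂ (fun s => ∑' n : ℕ, trapError s (n + 1 + a)) U := by
    refine Complex.differentiableOn_tsum_of_summable_norm (summable_trapError_bound hr1 (‖s‖ + 1))
      (fun n z hz => (differentiableAt_trapError hz.2 (by positivity)).differentiableWithinAt)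
      hU (fun n z hz => ?_)
    have h1 := hz.1.1
    have h2 : ‖z‖ < ‖s‖ + 1 := by simpa using hz.1.2
    exact norm_trapError_le_of_re hz.2 (le_of_lt h1) hr1 h2.le ha n
  have h := htsum.differentiableAt (hU.mem_nhds hsU)
  unfold eulerMaclaurinZeta
  refine DifferentiableAt.add ?_ h
  fun_prop (disch := first | assumption | exact Or.inl ha0 | exact Or.inl ha1)

/-- The half-plane punctured at the pole is a union of four convex pieces that meet in a chain. -/
lemma isPreconnected_re_gt_diff_one : IsPreconnected ({z : ℂ | -1 < z.re} ∩ {1}ᶜ) := by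
  have e : ({z : ℂ | -1 < z.re} ∩ {1}ᶜ) =
      (({z : ℂ | -1 < z.re} ∩ {z | z.re < 1}) ∪ ({z : ℂ | -1 < z.re} ∩ {z | 0 < z.im})) ∪
      (({z : ℂ | 1 < z.re}) ∪ ({z : ℂ | -1 < z.re} ∩ {z | z.im < 0})) := by
    ext z
    simp only [mem_inter_iff, mem_ofPred_eq, mem_compl_iff, mem_singleton_iff, mem_union,
      Complex.ext_iff, Complex.one_re, Complex.one_im]
    constructor
    · rintro ⟨h1, h2⟩
      rcases lt_trichotomy z.re 1 with h | h | h
      · tauto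
      · rcases lt_trichotomy z.im 0 with h' | h' | h' <;> tauto
      · tauto
    · rintro ((⟨h1, h2⟩ | ⟨h1, h2⟩) | (h | ⟨h1, h2⟩)) <;>
        refine ⟨by linarith, fun hh => by linarith [hh.1, hh.2]⟩
  have c1 := convex_halfSpace_re_gt (-1)
  rw [e]
  refine IsPreconnected.union ⟨2, 1⟩ ?_ ?_
    (.union ⟨0, 1⟩ ?_ ?_ (c1.inter (convex_halfSpace_re_lt 1)).isPreconnected
      (c1.inter (convex_halfSpace_im_gt 0)).isPreconnected)
    (.union ⟨2, -1⟩ ?_ ?_ (convex_halfSpace_re_gt 1).isPreconnected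
      (c1.inter (convex_halfSpace_im_lt 0)).isPreconnected) <;> simp <;> norm_num

/-- The Euler–Maclaurin expression continues the Hurwitz zeta function to `-1 < Re s`. -/
lemma hurwitzZeta_eq_eulerMaclaurinZeta {a : ℝ} (ha : a ∈ Ioo (0 : ℝ) 1) {s : ℂ}
    (hs : -1 < s.re) (hs1 : s ≠ 1) : hurwitzZeta a s = eulerMaclaurinZeta a s := by
  let U : Set ℂ := {z : ℂ | -1 < z.re} ∩ {1}ᶜ
  have hU : IsOpen U :=
    (isOpen_lt continuous_const Complex.continuous_re).inter isOpen_compl_singleton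
  have hf : AnalyticOnNhd ℂ (hurwitzZeta a) U := DifferentiableOn.analyticOnNhd
    (fun z hz => (differentiableAt_hurwitzZeta _ hz.2).differentiableWithinAt) hU
  have hg : AnalyticOnNhd ℂ (eulerMaclaurinZeta a) U := DifferentiableOn.analyticOnNhd
    (fun z hz => (differentiableAt_eulerMaclaurinZeta ha.1 hz.1 hz.2).differentiableWithinAt) hU
  refine hf.eqOn_of_preconnected_of_eventuallyEq hg isPreconnected_re_gt_diff_one
    (z₀ := 2) (by simp [U]; norm_num) ?_ ⟨hs, hs1⟩
  filter_upwards [(isOpen_lt continuous_const Complex.continuous_re).mem_nhds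
    (show (1 : ℝ) < (2 : ℂ).re by simp)] with z hz
  exact hurwitzZeta_eq_of_one_lt_re ha hz

/-- The bound that dominates `ζ_H(a, s)` by an integrable function of `a ∈ (0, 1)`, locally
uniformly in `-1 < Re s < 1`. -/
lemma norm_hurwitzZeta_le {r C : ℝ} (hr1 : r < 1) {a : ℝ} (ha : a ∈ Ioo (0 : ℝ) 1) {s : ℂ}
    (hs : |s.re| ≤ r) (hC : ‖s‖ ≤ C) :
    ‖hurwitzZeta a s‖ ≤ a ^ (-r) +
      (1 + 4 / (1 - r) + ∑' n : ℕ, C * (C + 1) * ((n + 1 : ℕ) : ℝ) ^ (r - 2)) := by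
  obtain ⟨hs2, hs3⟩ := abs_le.mp hs
  have hs1 : s ≠ 1 := by rintro rfl; simp at hs3; linarith
  have ha' : 0 < 1 + a := by linarith [ha.1]
  rw [hurwitzZeta_eq_eulerMaclaurinZeta ha (by linarith) hs1, eulerMaclaurinZeta]
  have h1 : ‖(a : ℂ) ^ (-s)‖ ≤ a ^ (-r) := by
    rw [Complex.norm_cpow_eq_rpow_re_of_pos ha.1]
    exact Real.rpow_le_rpow_of_exponent_ge ha.1 ha.2.le (by simp; linarith)
  have h2 : ‖(1 / 2 : ℂ) * ((1 + a : ℝ) : ℂ) ^ (-s)‖ ≤ 1 := by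
    rw [norm_mul, Complex.norm_cpow_eq_rpow_re_of_pos ha']
    have : (1 + a) ^ (-s).re ≤ 2 := calc
      (1 + a) ^ (-s).re ≤ (1 + a) ^ (1 : ℝ) :=
        Real.rpow_le_rpow_of_exponent_le (by linarith [ha.1]) (by simp; linarith)
      _ ≤ 2 := by rw [Real.rpow_one]; linarith [ha.2]
    norm_num
    simp at this
    linarith
  have h3 : ‖((1 + a : ℝ) : ℂ) ^ (1 - s) / (1 - s)‖ ≤ 4 / (1 - r) := by
    rw [norm_div, Complex.norm_cpow_eq_rpow_re_of_pos ha']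
    have h4 : (1 + a) ^ (1 - s).re ≤ 4 := calc
      (1 + a) ^ (1 - s).re ≤ (1 + a) ^ (2 : ℝ) :=
        Real.rpow_le_rpow_of_exponent_le (by linarith [ha.1]) (by simp; linarith)
      _ ≤ 4 := by rw [Real.rpow_two]; nlinarith [ha.2, ha.1]
    have h5 : 1 - r ≤ ‖1 - s‖ := by
      refine le_trans ?_ (Complex.re_le_norm _)
      simp; linarith
    have : 0 < 1 - r := by linarith
    gcongr
  have h4 : ‖∑' n : ℕ, trapError s (n + 1 + a)‖ ≤
      ∑' n : ℕ, C * (C + 1) * ((n + 1 : ℕ) : ℝ) ^ (r - 2) :=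
    tsum_of_norm_bounded (summable_trapError_bound hr1 C).hasSum
      (norm_trapError_le_of_re hs1 (by linarith) hr1 hC ha.1)
  calc _ ≤ ‖(a : ℂ) ^ (-s)‖ + ‖(1 / 2 : ℂ) * ((1 + a : ℝ) : ℂ) ^ (-s)‖ +
        ‖((1 + a : ℝ) : ℂ) ^ (1 - s) / (1 - s)‖ + ‖∑' n : ℕ, trapError s (n + 1 + a)‖ :=
        (norm_add_le _ _).trans (by gcongr; exact (norm_sub_le _ _).trans (by
          gcongr; exact norm_add_le _ _))
    _ ≤ _ := by linarith

lemma continuousOn_hurwitzZeta {s : ℂ} (hs : -1 < s.re) (hs1 : s ≠ 1) :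
    ContinuousOn (fun a : ℝ => hurwitzZeta a s) (Ioo 0 1) := by
  refine ContinuousOn.congr (f := fun a => eulerMaclaurinZeta a s) ?_
    (fun a ha => hurwitzZeta_eq_eulerMaclaurinZeta ha hs hs1)
  have h1 (r : ℂ) (c : ℝ) (hc : 0 ≤ c) :
      ContinuousOn (fun x : ℝ => ((c + x : ℝ) : ℂ) ^ r) (Ioo 0 1) := fun x hx =>
    (hasDerivAt_add_cpow (x := c) (t := x) (by linarith [hx.1])
      r).continuousAt.continuousWithinAt
  obtain ⟨r, hr, hr1⟩ : ∃ r : ℝ, -s.re < r ∧ r < 1 := exists_between (by linarith)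
  have h2 : ContinuousOn (fun a : ℝ => ∑' n : ℕ, trapError s (n + 1 + a)) (Ioo 0 1) := by
    refine continuousOn_tsum (fun n => (continuousOn_trapError s).comp (by fun_prop) ?_)
      (summable_trapError_bound hr1 ‖s‖)
      (fun n a ha => norm_trapError_le_of_re hs1 (by linarith) hr1 le_rfl ha.1 n)
    intro a ha
    have := ha.1
    simp only [mem_Ioi]
    positivity
  unfold eulerMaclaurinZeta
  refine ContinuousOn.add (((?_ : ContinuousOn _ _).add
    (continuousOn_const.mul (h1 _ 1 zero_le_one))).sub ((h1 _ 1 zero_le_one).div_const _)) h2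
  simpa using h1 (-s) 0 le_rfl

/-! ### Fourier coefficients -/

/-- An integral of a locally dominated family of holomorphic functions is holomorphic. -/
lemma differentiableAt_integral_of_dominated {μ : Measure ℝ} {F : ℂ → ℝ → ℂ} {s₀ : ℂ} {R : ℝ}
    (hR : 0 < R) {bound : ℝ → ℝ}
    (hmeas : ∀ s ∈ Metric.ball s₀ R, AEStronglyMeasurable (F s) μ)
    (hdiff : ∀ᵐ a ∂μ, DifferentiableOn ℂ (F · a) (Metric.ball s₀ R))
    (hbound : ∀ᵐ a ∂μ, ∀ s ∈ Metric.ball s₀ R, ‖F s a‖ ≤ bound a) (hint : Integrable bound μ) :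
    DifferentiableAt ℂ (fun s => ∫ a, F s a ∂μ) s₀ := by
  have hs₀ : s₀ ∈ Metric.ball s₀ R := Metric.mem_ball_self hR
  have hmem : ∀ x ∈ Metric.ball s₀ (R / 2), Metric.closedBall x (R / 4) ⊆ Metric.ball s₀ R := by
    intro x hx
    refine Metric.closedBall_subset_ball' ?_
    rw [Metric.mem_ball] at hx
    linarith
  have hd : ∀ᵐ a ∂μ, ∀ x ∈ Metric.ball s₀ (R / 2),
      HasDerivAt (F · a) (deriv (F · a) x) x := by
    filter_upwards [hdiff] with a ha x hx
    exact (ha.differentiableAt (Metric.isOpen_ball.mem_nhds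
      (hmem x hx (Metric.mem_closedBall_self (by linarith))))).hasDerivAt
  -- the derivative is an almost everywhere limit of measurable difference quotients
  have hmeas' : AEStronglyMeasurable (fun a => deriv (F · a) s₀) μ := by
    have hu : Tendsto (fun n : ℕ => s₀ + ((R / 2 / (n + 1) : ℝ) : ℂ)) atTop (𝓝[≠] s₀) := by
      refine tendsto_nhdsWithin_iff.mpr ⟨?_, Eventually.of_forall fun n => ?_⟩
      · have h1 : Tendsto (fun n : ℕ => R / 2 / ((n : ℝ) + 1)) atTop (𝓝 0) :=
          tendsto_const_nhds.div_atTop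
            (tendsto_atTop_add_const_right _ _ tendsto_natCast_atTop_atTop)
        have h2 := ((Complex.continuous_ofReal.tendsto 0).comp h1).const_add s₀
        simpa using h2
      · have : ((R / 2 / (n + 1) : ℝ) : ℂ) ≠ 0 := by
          rw [Complex.ofReal_ne_zero]; positivity
        simpa using this
    refine aestronglyMeasurable_of_tendsto_ae atTop
      (f := fun (n : ℕ) a => slope (F · a) s₀ (s₀ + ((R / 2 / (n + 1) : ℝ) : ℂ)))
      (fun n => ?_) ?_
    · simp only [slope_def_module]
      refine AEStronglyMeasurable.const_smul ((hmeas _ ?_).sub (hmeas _ hs₀)) ((_ : ℂ)⁻¹)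
      rw [Metric.mem_ball, dist_eq_norm, add_sub_cancel_left, Complex.norm_real,
        Real.norm_of_nonneg (by positivity), div_lt_iff₀ (by positivity)]
      nlinarith [n.cast_nonneg (α := ℝ)]
    · filter_upwards [hd] with a ha
      exact (hasDerivAt_iff_tendsto_slope.mp (ha s₀ (Metric.mem_ball_self (by linarith)))).comp hu
  refine (hasDerivAt_integral_of_dominated_loc_of_deriv_le (bound := fun a => bound a / (R / 4))
    (F' := fun s a => deriv (F · a) s) (Metric.ball_mem_nhds s₀ (half_pos hR)) ?_ ?_ hmeas' ?_
    (hint.div_const _) hd).2.differentiableAt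
  · filter_upwards [Metric.ball_mem_nhds s₀ hR] with s hs using hmeas s hs
  · exact hint.mono' (hmeas _ hs₀) (hbound.mono fun a ha => ha _ hs₀)
  · filter_upwards [hdiff, hbound] with a ha hb x hx
    have hR4 : 0 < R / 4 := by linarith
    refine Complex.norm_deriv_le_of_forall_mem_sphere_norm_le hR4 ?_
      (fun z hz => hb z (hmem x hx (Metric.sphere_subset_closedBall hz)))
    exact (ha.mono ((closure_ball x hR4.ne').trans_subset (hmem x hx))).diffContOnCl

lemma integral_exp_two_pi_I_int (k : ℤ) :
    ∫ a in (0 : ℝ)..1, Complex.exp (2 * π * Complex.I * k * a) = if k = 0 then 1 else 0 := by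
  split_ifs with hk
  · simp [hk]
  · have hc : 2 * π * Complex.I * (k : ℂ) ≠ 0 :=
      mul_ne_zero Complex.two_pi_I_ne_zero (by exact_mod_cast hk)
    rw [integral_exp_mul_complex hc]
    have : Complex.exp (2 * π * Complex.I * k) = 1 := by
      rw [mul_comm]; exact Complex.exp_int_mul_two_pi_mul_I k
    simp [this]

/-- Termwise integration: since `n ≠ 0`, only the index `m = |n|` of an absolutely convergent
trigonometric series contributes to its `-n`-th Fourier coefficient. -/
lemma integral_mul_exp_of_hasSum {w : ℂ} (hw : 1 < w.re) {n : ℤ} (hn : n ≠ 0) (A B : ℂ)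
    {f : ℝ → ℂ} (hf : ∀ a : ℝ, HasSum (fun m : ℕ =>
      A * (Complex.exp (2 * π * Complex.I * a * m) / (m : ℂ) ^ w) +
      B * (Complex.exp (2 * π * Complex.I * (-a : ℝ) * m) / (m : ℂ) ^ w)) (f a)) :
    ∫ a in (0 : ℝ)..1, f a * Complex.exp (2 * π * Complex.I * n * a) =
      (if n < 0 then A else B) * (1 / (n.natAbs : ℂ) ^ w) := by
  have hunit (k : ℤ) (a : ℝ) : ‖Complex.exp (2 * π * Complex.I * k * a)‖ = 1 := by
    simp [Complex.norm_exp]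
  let F : ℕ → ℝ → ℂ := fun m a =>
    A * (1 / (m : ℂ) ^ w) * Complex.exp (2 * π * Complex.I * (n + m : ℤ) * a) +
    B * (1 / (m : ℂ) ^ w) * Complex.exp (2 * π * Complex.I * (n - m : ℤ) * a)
  have hF : ∀ a : ℝ, HasSum (fun m => F m a)
      (f a * Complex.exp (2 * π * Complex.I * n * a)) := by
    intro a
    refine ((hf a).mul_right (Complex.exp (2 * π * Complex.I * n * a))).congr_fun fun m => ?_
    have e1 : Complex.exp (2 * π * Complex.I * (n + m : ℤ) * a) =
        Complex.exp (2 * π * Complex.I * a * m) * Complex.exp (2 * π * Complex.I * n * a) := by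
      rw [← Complex.exp_add]; push_cast; ring_nf
    have e2 : Complex.exp (2 * π * Complex.I * (n - m : ℤ) * a) =
        Complex.exp (2 * π * Complex.I * (-a : ℝ) * m) *
          Complex.exp (2 * π * Complex.I * n * a) := by
      rw [← Complex.exp_add]; push_cast; ring_nf
    simp only [F, e1, e2]
    ring
  have hsumm : Summable (fun m : ℕ => ‖A * (1 / (m : ℂ) ^ w)‖ + ‖B * (1 / (m : ℂ) ^ w)‖) := by
    have h := (Complex.summable_one_div_nat_cpow.mpr hw).norm
    simp only [norm_mul A, norm_mul B]
    exact (h.mul_left _).add (h.mul_left _)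
  have hcont (k : ℤ) (c : ℂ) :
      Continuous (fun a : ℝ => c * Complex.exp (2 * π * Complex.I * k * a)) := by fun_prop
  have hint := intervalIntegral.hasSum_integral_of_dominated_convergence
    (a := 0) (b := 1) (μ := volume) (F := F)
    (f := fun a => f a * Complex.exp (2 * π * Complex.I * n * a))
    (fun m _ => ‖A * (1 / (m : ℂ) ^ w)‖ + ‖B * (1 / (m : ℂ) ^ w)‖)
    (fun m => ((hcont _ _).add (hcont _ _)).aestronglyMeasurable)
    (fun m => Eventually.of_forall fun a _ => by
      refine (norm_add_le _ _).trans (le_of_eq ?_)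
      rw [norm_mul _ (Complex.exp _), norm_mul _ (Complex.exp _), hunit, hunit, mul_one, mul_one])
    (Eventually.of_forall fun a _ => hsumm) intervalIntegrable_const
    (Eventually.of_forall fun a _ => hF a)
  have hval : ∀ m : ℕ, ∫ a in (0 : ℝ)..1, F m a =
      if m = n.natAbs then (if n < 0 then A else B) * (1 / (n.natAbs : ℂ) ^ w) else 0 := by
    intro m
    simp only [F]
    rw [intervalIntegral.integral_add ((hcont _ _).intervalIntegrable _ _)
      ((hcont _ _).intervalIntegrable _ _), intervalIntegral.integral_const_mul,
      intervalIntegral.integral_const_mul, integral_exp_two_pi_I_int, integral_exp_two_pi_I_int]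
    by_cases hm : m = n.natAbs
    · subst hm
      rcases lt_or_gt_of_ne hn with h | h
      · rw [if_pos (by omega), if_neg (by omega), if_pos rfl, if_pos h]
        ring
      · rw [if_neg (by omega), if_pos (by omega), if_pos rfl, if_neg (by omega)]
        ring
    · rw [if_neg (by omega), if_neg (by omega), if_neg hm]
      ring
  simp only [hval] at hint
  exact hint.unique (hasSum_ite_eq _ _)

/-- The principal power of `-2πin`, split according to `arg (-2πin) = ∓π/2`. -/
lemma neg_two_pi_I_mul_cpow {n : ℤ} (hn : n ≠ 0) (w : ℂ) :
    (-2 * π * Complex.I * n) ^ w = (2 * π : ℂ) ^ w * (n.natAbs : ℂ) ^ w *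
      Complex.exp (if n < 0 then π * Complex.I * w / 2 else -π * Complex.I * w / 2) := by
  have hm : (0 : ℝ) < n.natAbs := by exact_mod_cast Int.natAbs_pos.mpr hn
  have key : (2 * π : ℂ) ^ w * (n.natAbs : ℂ) ^ w = ((2 * π * n.natAbs : ℝ) : ℂ) ^ w := by
    have := Complex.mul_cpow_ofReal_nonneg (a := 2 * π) (b := n.natAbs) (by positivity) hm.le w
    push_cast at this ⊢
    exact this.symm
  have hp : (0 : ℝ) < 2 * π * n.natAbs := by positivity
  have hp' : ((2 * π * n.natAbs : ℝ) : ℂ) ≠ 0 := by exact_mod_cast hp.ne'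
  rw [key]
  split_ifs with h
  · have e : -2 * π * Complex.I * (n : ℂ) = ((2 * π * n.natAbs : ℝ) : ℂ) * Complex.I := by
      have : (n : ℂ) = -((n.natAbs : ℤ) : ℂ) := by
        rw [← Int.cast_neg]; congr 1; omega
      rw [this, Int.cast_natCast, Complex.ofReal_mul, Complex.ofReal_mul, Complex.ofReal_natCast]
      rw [Complex.ofReal_ofNat]
      ring
    rw [e, Complex.cpow_def_of_ne_zero (mul_ne_zero hp' Complex.I_ne_zero),
      Complex.cpow_def_of_ne_zero hp', Complex.log_ofReal_mul hp Complex.I_ne_zero, Complex.log_I,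
      ← Complex.ofReal_log hp.le, ← Complex.exp_add]
    ring_nf
  · have e : -2 * π * Complex.I * (n : ℂ) = ((2 * π * n.natAbs : ℝ) : ℂ) * (-Complex.I) := by
      have : (n : ℂ) = ((n.natAbs : ℤ) : ℂ) := by congr 1; omega
      rw [this, Int.cast_natCast, Complex.ofReal_mul, Complex.ofReal_mul, Complex.ofReal_natCast]
      rw [Complex.ofReal_ofNat]
      ring
    have hI : -Complex.I ≠ 0 := neg_ne_zero.mpr Complex.I_ne_zero
    rw [e, Complex.cpow_def_of_ne_zero (mul_ne_zero hp' hI),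
      Complex.cpow_def_of_ne_zero hp', Complex.log_ofReal_mul hp hI, Complex.log_neg_I,
      ← Complex.ofReal_log hp.le, ← Complex.exp_add]
    ring_nf

/-- The case where the Hurwitz formula turns `ζ_H(a, 1 - w)` into an absolutely convergent
trigonometric series. -/
lemma integral_hurwitzZeta_of_one_lt_re {w : ℂ} (hw : 1 < w.re) {n : ℤ} (hn : n ≠ 0) :
    ∫ a in (0 : ℝ)..1, hurwitzZeta a (1 - w) * Complex.exp (2 * π * Complex.I * n * a) =
      Complex.Gamma w / (-2 * π * Complex.I * n) ^ w := by
  have hw1 : w ≠ 1 := by rintro rfl; simp at hw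
  have hwn : ∀ k : ℕ, w ≠ -k := by
    rintro k rfl
    simp at hw
    linarith [k.cast_nonneg (α := ℝ)]
  rw [integral_mul_exp_of_hasSum hw hn
    ((2 * π) ^ (-w) * Complex.Gamma w * Complex.exp (-π * Complex.I * w / 2))
    ((2 * π) ^ (-w) * Complex.Gamma w * Complex.exp (π * Complex.I * w / 2))]
  · rw [neg_two_pi_I_mul_cpow hn, Complex.cpow_neg]
    split_ifs
    · rw [show -π * Complex.I * w / 2 = -(π * Complex.I * w / 2) by ring, Complex.exp_neg]
      simp only [div_eq_mul_inv, mul_inv]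
      ring
    · rw [show -π * Complex.I * w / 2 = -(π * Complex.I * w / 2) by ring, Complex.exp_neg]
      simp only [div_eq_mul_inv, mul_inv, inv_inv]
      ring
  · intro a
    have h1 := hasSum_expZeta_of_one_lt_re a hw
    have h2 := hasSum_expZeta_of_one_lt_re (-a) hw
    rw [hurwitzZeta_one_sub _ hwn (Or.inr hw1)]
    refine ((((h1.mul_left (Complex.exp (-π * Complex.I * w / 2))).add
      (h2.mul_left (Complex.exp (π * Complex.I * w / 2)))).mul_left
      ((2 * π) ^ (-w) * Complex.Gamma w))).congr_fun fun m => ?_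
    ring

/-- Holomorphy in `s` of the Fourier coefficients of `a ↦ ζ_H(a, s)`. -/
lemma differentiableAt_integral_hurwitzZeta {s : ℂ} (hs : -1 < s.re) (hs' : s.re < 1) (n : ℤ) :
    DifferentiableAt ℂ (fun s => ∫ a in (0 : ℝ)..1,
      hurwitzZeta a s * Complex.exp (2 * π * Complex.I * n * a)) s := by
  simp only [intervalIntegral.integral_of_le zero_le_one, integral_Ioc_eq_integral_Ioo]
  obtain ⟨r, hr, hr1⟩ : ∃ r : ℝ, |s.re| < r ∧ r < 1 := exists_between (abs_lt.mpr ⟨hs, hs'⟩)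
  have hre : ∀ z ∈ Metric.ball s (r - |s.re|), |z.re| ≤ r ∧ ‖z‖ ≤ ‖s‖ + 1 := by
    intro z hz
    rw [Metric.mem_ball, dist_eq_norm] at hz
    have h1 := Complex.abs_re_le_norm (z - s)
    have h2 := abs_sub_abs_le_abs_sub z.re s.re
    have h3 := norm_sub_norm_le z s
    rw [Complex.sub_re] at h1
    exact ⟨by linarith, by linarith [abs_nonneg s.re]⟩
  have hne : ∀ z : ℂ, |z.re| ≤ r → -1 < z.re ∧ z ≠ 1 := by
    intro z hz
    refine ⟨by linarith [(abs_le.mp hz).1], ?_⟩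
    rintro rfl
    simp at hz
    linarith
  refine differentiableAt_integral_of_dominated (R := r - |s.re|) (by linarith)
    (bound := fun a => a ^ (-r) +
      (1 + 4 / (1 - r) +
        ∑' n : ℕ, (‖s‖ + 1) * ((‖s‖ + 1) + 1) * ((n + 1 : ℕ) : ℝ) ^ (r - 2))) ?_ ?_ ?_ ?_
  · intro z hz
    obtain ⟨h1, h2⟩ := hne z (hre z hz).1
    exact ((continuousOn_hurwitzZeta h1 h2).mul (by fun_prop)).aestronglyMeasurable
      measurableSet_Ioo
  · refine Eventually.of_forall fun a z hz => ?_
    exact ((differentiableAt_hurwitzZeta _ (hne z (hre z hz).1).2).mul_const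
      _).differentiableWithinAt
  · refine ae_restrict_of_forall_mem measurableSet_Ioo fun a ha z hz => ?_
    have : ‖Complex.exp (2 * π * Complex.I * n * a)‖ = 1 := by simp [Complex.norm_exp]
    rw [norm_mul, this, mul_one]
    exact norm_hurwitzZeta_le hr1 ha (hre z hz).1 (hre z hz).2
  · refine Integrable.add ?_ (integrable_const _)
    exact (intervalIntegral.integrableOn_Ioo_rpow_iff zero_lt_one).mpr (by linarith)

lemma integral_hurwitzZeta_mul_exp {s : ℂ} (hs : s.re < 1) {n : ℤ} (hn : n ≠ 0) :
    ∫ a in (0 : ℝ)..1, hurwitzZeta a s * Complex.exp (2 * π * Complex.I * n * a) =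
      Complex.Gamma (1 - s) / (-2 * π * Complex.I * n) ^ (1 - s) := by
  have hneg : ∀ z : ℂ, z.re < 0 →
      ∫ a in (0 : ℝ)..1, hurwitzZeta a z * Complex.exp (2 * π * Complex.I * n * a) =
        Complex.Gamma (1 - z) / (-2 * π * Complex.I * n) ^ (1 - z) := by
    intro z hz
    have := integral_hurwitzZeta_of_one_lt_re (w := 1 - z)
      (by rw [Complex.sub_re, Complex.one_re]; linarith) hn
    rwa [sub_sub_cancel] at this
  rcases lt_or_ge s.re 0 with h | h
  · exact hneg s h
  have hc : -2 * π * Complex.I * (n : ℂ) ≠ 0 := by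
    simp [hn, Real.pi_ne_zero]
  let V : Set ℂ := {z | -1 < z.re} ∩ {z | z.re < 1}
  have hV : IsOpen V := (isOpen_lt continuous_const Complex.continuous_re).inter
    (isOpen_lt Complex.continuous_re continuous_const)
  have hf := DifferentiableOn.analyticOnNhd (fun z (hz : z ∈ V) =>
    (differentiableAt_integral_hurwitzZeta hz.1 hz.2 n).differentiableWithinAt) hV
  have hg : AnalyticOnNhd ℂ
      (fun z => Complex.Gamma (1 - z) / (-2 * π * Complex.I * n) ^ (1 - z)) V := by
    refine DifferentiableOn.analyticOnNhd (fun z hz => DifferentiableAt.differentiableWithinAt ?_) hV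
    have hz1 : z.re < 1 := hz.2
    have h1 : DifferentiableAt ℂ Complex.Gamma (1 - z) := by
      refine Complex.differentiableAt_Gamma _ fun k hk => ?_
      have := congrArg Complex.re hk
      simp at this
      linarith [k.cast_nonneg (α := ℝ)]
    refine DifferentiableAt.div (h1.comp z (by fun_prop)) ?_ ?_
    · exact DifferentiableAt.const_cpow (by fun_prop) (Or.inl hc)
    · simp [Complex.cpow_eq_zero_iff, -neg_mul, hc]
  refine hf.eqOn_of_preconnected_of_eventuallyEq hg (z₀ := ((-1 / 2 : ℝ) : ℂ))
    ((convex_halfSpace_re_gt (-1)).inter (convex_halfSpace_re_lt 1)).isPreconnected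
    ?_ ?_ ⟨lt_of_lt_of_le (by norm_num) h, hs⟩
  · constructor <;> simp only [mem_ofPred_eq, Complex.ofReal_re] <;> norm_num
  · filter_upwards [(isOpen_lt Complex.continuous_re continuous_const).mem_nhds
      (show (((-1 / 2 : ℝ) : ℂ)).re < 0 by rw [Complex.ofReal_re]; norm_num)] with z hz
    exact hneg z hz

/-- For `ρ ∈ ℂ` with `Re ρ > −1` and `n` a nonzero integer,
`∫₀¹ ζ_H(1−α, −ρ) e^{−2πinα} dα = Γ(ρ+1)/(−2πin)^{ρ+1}` (principal branch). -/
theorem fourier_coefficient_qCheck_rho (ρ : ℂ) (hρ : -1 < ρ.re) (n : ℤ) (hn : n ≠ 0) :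
    (∫ α in (0:ℝ)..1, hurwitzZeta ((1 - α : ℝ) : UnitAddCircle) (-ρ) *
        Complex.exp (-2 * (π : ℂ) * Complex.I * (n : ℂ) * (α : ℂ))) =
      Complex.Gamma (ρ + 1) / (-2 * (π : ℂ) * Complex.I * (n : ℂ)) ^ (ρ + 1) := by
  have h := integral_hurwitzZeta_mul_exp (s := -ρ) (by simpa [neg_lt] using hρ) hn
  rw [sub_neg_eq_add, add_comm 1 ρ] at h
  rw [← h]
  have hsub := intervalIntegral.integral_comp_sub_left (a := 0) (b := 1)
    (fun a : ℝ => hurwitzZeta a (-ρ) * Complex.exp (2 * π * Complex.I * n * a)) 1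
  rw [sub_self, sub_zero] at hsub
  rw [← hsub]
  refine intervalIntegral.integral_congr fun α _ => ?_
  have e : Complex.exp (2 * π * Complex.I * n * ((1 - α : ℝ) : ℂ)) =
      Complex.exp (-2 * π * Complex.I * n * α) := by
    rw [← one_mul (Complex.exp (-2 * π * Complex.I * n * α)),
      ← Complex.exp_int_mul_two_pi_mul_I n, ← Complex.exp_add]
    push_cast
    ring_nf
  simp only [e]
end

section
/- Let ρ ∈ ℂ with Re(ρ) > 0 and let α ∈ (0,1). Then ζ_H(1−α, −ρ) = −(Γ(ρ+1)/(2^ρ π^{ρ+1})) ∑_{n=1}^{∞} sin(2πnα + πρ/2)/n^{ρ+1}. (This is the Fourier-series reconstruction of the generalized periodized Bernoulli function q̌_ρ(α) = e^{iπρ} ζ_H(1−α, −ρ), from which the functional equation of the Riemann zeta function follows by setting α = 0.) -/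
/-!
Evaluate the functional equations of the even and odd Hurwitz zeta functions at `s = ρ + 1` and at
the point `1 - α ≡ -α` of the unit circle: since `cos (πs/2) = -sin (πρ/2)` and
`sin (πs/2) = cos (πρ/2)`, this expresses `ζ_H(1 - α, -ρ)` through
`sin (πρ/2) * cosZeta α s + cos (πρ/2) * sinZeta α s`. As `1 < Re s`, both periodic zeta functions
are given by their absolutely convergent Dirichlet series, and the addition formula for the sine
merges the two into the series in the statement.
-/

open HurwitzZeta Real

/-- The sine series converges to a combination of the periodic zeta functions
`cosZeta` and `sinZeta`; this is the addition formula applied term by term. -/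
theorem hasSum_sin_add_div (ρ : ℂ) (hρ : 0 < ρ.re) (α : ℝ) :
    HasSum (fun n : ℕ ↦
        Complex.sin (2 * (π : ℂ) * ((n : ℂ) + 1) * (α : ℂ) + (π : ℂ) * ρ / 2) /
          ((n : ℂ) + 1) ^ (ρ + 1))
      (Complex.sin (π * ρ / 2) * cosZeta α (ρ + 1) +
        Complex.cos (π * ρ / 2) * sinZeta α (ρ + 1)) := by
  have hs : 1 < (ρ + 1).re := by simpa using hρ
  have hs0 : ρ + 1 ≠ 0 := fun h ↦ by norm_num [h] at hs
  have h := ((hasSum_nat_cosZeta α hs).mul_left (Complex.sin (π * ρ / 2))).add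
    ((hasSum_nat_sinZeta α hs).mul_left (Complex.cos (π * ρ / 2)))
  -- The term `n = 0` of the Dirichlet series vanishes, because `0 ^ (ρ + 1) = 0` and `x / 0 = 0`.
  rw [← hasSum_nat_add_iff' 1] at h
  convert! h using 1
  · ext n
    rw [Complex.sin_add]
    push_cast
    rw [show 2 * (π : ℂ) * ((n : ℂ) + 1) * α = 2 * π * α * (n + 1) by ring]
    ring
  · simp [Complex.zero_cpow hs0]

/-- For `ρ ∈ ℂ` with `Re ρ > 0` and `α ∈ (0,1)`,
`ζ_H(1−α, −ρ) = −(Γ(ρ+1)/(2^ρ π^{ρ+1})) ∑_{n=1}^{∞} sin(2πnα + πρ/2)/n^{ρ+1}`. -/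
theorem hurwitzZeta_fourier_series (ρ : ℂ) (hρ : 0 < ρ.re)
    (α : ℝ) (h0 : 0 < α) (h1 : α < 1) :
    hurwitzZeta ((1 - α : ℝ) : UnitAddCircle) (-ρ) =
      -(Complex.Gamma (ρ + 1) / ((2 : ℂ) ^ ρ * (π : ℂ) ^ (ρ + 1))) *
        ∑' n : ℕ,
          Complex.sin (2 * (π : ℂ) * ((n : ℂ) + 1) * (α : ℂ) + (π : ℂ) * ρ / 2) /
            ((n : ℂ) + 1) ^ (ρ + 1) := by
  rw [(hasSum_sin_add_div ρ hρ α).tsum_eq]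
  have hs (n : ℕ) : ρ + 1 ≠ -n := fun h ↦ by
    have := congrArg Complex.re h
    simp at this
    linarith [(Nat.cast_nonneg n : (0 : ℝ) ≤ n)]
  have hs1 : ρ + 1 ≠ 1 := fun h ↦ by
    have := congrArg Complex.re h
    simp at this
    linarith
  have ha : ((1 - α : ℝ) : UnitAddCircle) = -(α : UnitAddCircle) := by
    rw [AddCircle.coe_sub, AddCircle.coe_period, zero_sub]
  have hcos : Complex.cos (π * (ρ + 1) / 2) = -Complex.sin (π * ρ / 2) := by
    rw [← Complex.cos_add_pi_div_two]
    ring_nf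
  have hsin : Complex.sin (π * (ρ + 1) / 2) = Complex.cos (π * ρ / 2) := by
    rw [← Complex.sin_add_pi_div_two]
    ring_nf
  have hpow : (2 * π : ℂ) ^ (-(ρ + 1)) = (2 * (2 ^ ρ * (π : ℂ) ^ (ρ + 1)))⁻¹ := by
    have h := Complex.mul_cpow_ofReal_nonneg (a := 2) (b := π) (by norm_num) pi_pos.le (ρ + 1)
    push_cast at h
    rw [Complex.cpow_neg, h, Complex.cpow_add _ _ (two_ne_zero' ℂ), Complex.cpow_one]
    ring
  rw [show -ρ = 1 - (ρ + 1) by ring, ha, hurwitzZeta, hurwitzZetaEven_one_sub _ hs (Or.inr hs1),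
    hurwitzZetaOdd_one_sub _ hs, cosZeta_neg, sinZeta_neg, hcos, hsin, hpow, mul_inv]
  ring
end
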